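/- arXiv:2305.13151 — 2 statements merged into one kernel-verified Lean document; each statement's English description precedes it below -/
import Mathlib

section
/- For every integer n ≥ 1, p^{ed}_{od}(n) - p^{ed}_{od}(n-1) = 2·D_e(n-1) − D_o(n-1) (an identity of integers). -/
/-- Number of partitions of `n` into distinct parts in which
every odd part is smaller than every even part and at least one odd part occurs. -/
noncomputable def pedOd (n : ℕ) : ℕ :=
  Nat.card {π : n.Partition // π.parts.Nodup ∧
    (∀ a ∈ π.parts, ∀ b ∈ π.parts, Odd a → Even b → a < b) ∧
    (∃ a ∈ π.parts, Odd a)}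

/-- Number of partitions of `n` into distinct odd parts (`Dodd 0 = 1`). -/
noncomputable def Dodd (n : ℕ) : ℕ :=
  Nat.card {π : n.Partition // π.parts.Nodup ∧ ∀ a ∈ π.parts, Odd a}

/-- Number of partitions of `n` into distinct even parts (`Deven 0 = 1`). -/
noncomputable def Deven (n : ℕ) : ℕ :=
  Nat.card {π : n.Partition // π.parts.Nodup ∧ ∀ a ∈ π.parts, Even a}

/-! Sort the partitions counted by `pedOd` by their largest odd part `2m + 1`: the remaining parts
form an arbitrary set of odd numbers below `2m` and even numbers above `2m`. With `A_m` the product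
of `1 + x ^ i` over all such `i`, the generating function is `∑ x ^ (2m + 1) A_m`. Since
`A_m / (1 + x ^ (2m + 2)) = A_{m+1} / (1 + x ^ (2m + 1))`, multiplying by `1 - x` makes this sum
telescope, with potential `x (1 + x ^ (2m)) A_m`. The first term is twice `x` times the generating
function of `Deven`, the last tends to `x` times that of `Dodd`. All parts are bounded by `2N`, with
`N` large, so that polynomials suffice. -/

open Finset Polynomial

theorem subset_Icc_iff_zero_notMem {t : Finset ℕ} {M : ℕ} (ht : ∑ i ∈ t, i ≤ M) :
    t ⊆ Icc 1 M ↔ 0 ∉ t := by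
  refine ⟨fun h h0 => by simpa using h h0, fun h0 i hi => mem_Icc.2 ⟨?_, ?_⟩⟩
  · exact Nat.one_le_iff_ne_zero.2 fun h => h0 (h ▸ hi)
  · exact (single_le_sum_of_canonicallyOrdered (f := id) hi).trans ht

/-- Partitions of `n` into distinct parts, viewed as finite sets of positive integers with sum `n`.
The condition `Q` on the parts is imposed on the underlying multiset. -/
def nodupPartitionEquiv (n : ℕ) (Q : Multiset ℕ → Prop) :
    {π : n.Partition // π.parts.Nodup ∧ Q π.parts} ≃
      {t : Finset ℕ // (0 ∉ t ∧ Q t.val) ∧ ∑ i ∈ t, i = n} where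
  toFun π := ⟨⟨π.1.parts, π.2.1⟩, ⟨fun h => (π.1.parts_pos h).false, π.2.2⟩,
    (sum_val _).symm.trans π.1.parts_sum⟩
  invFun t := ⟨⟨t.1.val, fun hi => Nat.pos_of_ne_zero fun h => t.2.1.1 (h ▸ hi),
    (sum_val _).trans t.2.2⟩, t.1.nodup, t.2.1.2⟩

theorem card_nodup_partition_eq_coeff (R : Type*) [Semiring R] {n M : ℕ} (hn : n ≤ M)
    {Q : Multiset ℕ → Prop} {F : Finset (Finset ℕ)}
    (hF : ∀ t, t ∈ F ↔ t ⊆ Icc 1 M ∧ Q t.val) :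
    (Nat.card {π : n.Partition // π.parts.Nodup ∧ Q π.parts} : R) =
      (∑ t ∈ F, X ^ ∑ i ∈ t, i : R[X]).coeff n := by
  have hcard : Nat.card {π : n.Partition // π.parts.Nodup ∧ Q π.parts} =
      #{t ∈ F | n = ∑ i ∈ t, i} := by
    rw [Nat.card_congr (nodupPartitionEquiv n Q)]
    refine Nat.subtype_card _ fun t => ?_
    rw [mem_filter, hF, eq_comm (a := n)]
    exact and_congr_left fun ht => and_congr_left' (subset_Icc_iff_zero_notMem (ht.trans_le hn))
  simp only [hcard, finsetSum_coeff, coeff_X_pow, sum_boole]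

section GeneratingFunctions

variable {R : Type*} [CommSemiring R]

theorem sum_powerset_pow_sum (x : R) (S : Finset ℕ) :
    ∑ t ∈ S.powerset, x ^ ∑ i ∈ t, i = ∏ i ∈ S, (1 + x ^ i) := by
  rw [prod_one_add]
  exact sum_congr rfl fun t _ => (prod_pow_eq_pow_sum t (fun i => i) x).symm

theorem sum_image_insert_powerset_pow_sum (x : R) {S : Finset ℕ} {a : ℕ} (ha : a ∉ S) :
    ∑ t ∈ S.powerset.image (insert a), x ^ ∑ i ∈ t, i = x ^ a * ∏ i ∈ S, (1 + x ^ i) := by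
  have ha' : ∀ t ∈ S.powerset, a ∉ t := fun _ ht h => ha (mem_powerset.1 ht h)
  rw [sum_image (insert_erase_invOn.2.injOn.mono ha'), ← sum_powerset_pow_sum, mul_sum]
  exact sum_congr rfl fun t ht => by rw [sum_insert (ha' t ht), pow_add]

end GeneratingFunctions

/-- The numbers in `[1, 2N]` that are odd and less than `2m`, or even and greater than `2m`:
the parts, other than `2m + 1` itself, available to a partition whose odd parts are all smaller
than its even parts and whose largest odd part is `2m + 1`. -/
def splitParts (N m : ℕ) : Finset ℕ :=
  {i ∈ Icc 1 (2 * N) | Odd i ↔ i ≤ 2 * m}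

theorem mem_splitParts {N m i : ℕ} :
    i ∈ splitParts N m ↔ (1 ≤ i ∧ i ≤ 2 * N) ∧ (i % 2 = 1 ↔ i ≤ 2 * m) := by
  rw [splitParts, mem_filter, mem_Icc, Nat.odd_iff]

theorem subset_splitParts_zero {N : ℕ} {t : Finset ℕ} :
    t ⊆ splitParts N 0 ↔ t ⊆ Icc 1 (2 * N) ∧ ∀ a ∈ t, Even a := by
  simp only [subset_iff, mem_splitParts, mem_Icc, Nat.even_iff, ← forall₂_and]
  exact forall₂_congr fun i _ => by omega

theorem subset_splitParts_self {N : ℕ} {t : Finset ℕ} :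
    t ⊆ splitParts N N ↔ t ⊆ Icc 1 (2 * N) ∧ ∀ a ∈ t, Odd a := by
  simp only [subset_iff, mem_splitParts, mem_Icc, Nat.odd_iff, ← forall₂_and]
  exact forall₂_congr fun i _ => by omega

theorem two_mul_add_one_notMem_splitParts (N m : ℕ) : 2 * m + 1 ∉ splitParts N m := by
  rw [mem_splitParts]
  omega

/-- The generating function, evaluated at `x`, of the sets of numbers in `splitParts N m`. -/
def splitProd {R : Type*} [CommSemiring R] (x : R) (N m : ℕ) : R :=
  ∏ i ∈ splitParts N m, (1 + x ^ i)

/-- The sets of numbers in `[1, 2N]` containing an odd number and in which every odd number is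
smaller than every even number: the parts of the partitions counted by `pedOd`. -/
def oddBelowEvenSets (N : ℕ) : Finset (Finset ℕ) :=
  {t ∈ (Icc 1 (2 * N)).powerset |
    (∀ a ∈ t, ∀ b ∈ t, Odd a → Even b → a < b) ∧ ∃ a ∈ t, Odd a}

theorem mem_oddBelowEvenSets {N : ℕ} {t : Finset ℕ} :
    t ∈ oddBelowEvenSets N ↔ t ⊆ Icc 1 (2 * N) ∧
      (∀ a ∈ t, ∀ b ∈ t, Odd a → Even b → a < b) ∧ ∃ a ∈ t, Odd a := by
  rw [oddBelowEvenSets, mem_filter, mem_powerset]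

theorem insert_mem_oddBelowEvenSets {N m : ℕ} (hm : m < N) {u : Finset ℕ}
    (hu : u ⊆ splitParts N m) : insert (2 * m + 1) u ∈ oddBelowEvenSets N := by
  have hu' : ∀ i ∈ insert (2 * m + 1) u,
      (1 ≤ i ∧ i ≤ 2 * N) ∧ (i % 2 = 1 ↔ i ≤ 2 * m + 1) := fun i hi => by
    rcases mem_insert.1 hi with rfl | hi
    · omega
    · have := mem_splitParts.1 (hu hi)
      omega
  refine mem_oddBelowEvenSets.2 ⟨fun i hi => mem_Icc.2 (hu' i hi).1, fun a ha b hb hao hbe => ?_,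
    2 * m + 1, mem_insert_self _ _, odd_two_mul_add_one m⟩
  have := (hu' a ha).2
  have := (hu' b hb).2
  rw [Nat.odd_iff] at hao
  rw [Nat.even_iff] at hbe
  omega

theorem exists_insert_eq_of_mem_oddBelowEvenSets {N : ℕ} {t : Finset ℕ}
    (ht : t ∈ oddBelowEvenSets N) :
    ∃ m < N, ∃ u ⊆ splitParts N m, insert (2 * m + 1) u = t := by
  obtain ⟨htN, hlt, hodd⟩ := mem_oddBelowEvenSets.1 ht
  obtain ⟨M, hM, hmax⟩ :=
    exists_max_image {a ∈ t | Odd a} id (hodd.imp fun _ ha => mem_filter.2 ha)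
  obtain ⟨hMt, m, rfl⟩ : M ∈ t ∧ Odd M := mem_filter.1 hM
  have hMN := mem_Icc.1 (htN hMt)
  refine ⟨m, by omega, t.erase (2 * m + 1), fun i hi => ?_, insert_erase hMt⟩
  obtain ⟨hne, hit⟩ := mem_erase.1 hi
  refine mem_splitParts.2 ⟨mem_Icc.1 (htN hit), ?_⟩
  rcases Nat.even_or_odd i with hi | hi
  · have := hlt _ hMt i hit (odd_two_mul_add_one m) hi
    rw [Nat.even_iff] at hi
    omega
  · have := hmax i (mem_filter.2 ⟨hit, hi⟩)
    rw [Nat.odd_iff] at hi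
    simp only [id] at this
    omega

theorem oddBelowEvenSets_eq_biUnion (N : ℕ) :
    oddBelowEvenSets N =
      (range N).biUnion fun m => (splitParts N m).powerset.image (insert (2 * m + 1)) := by
  ext t
  simp only [mem_biUnion, mem_range, mem_image, mem_powerset]
  constructor
  · exact exists_insert_eq_of_mem_oddBelowEvenSets
  · rintro ⟨m, hm, u, hu, rfl⟩
    exact insert_mem_oddBelowEvenSets hm hu

theorem le_of_mem_insert_of_subset_splitParts {N m k : ℕ} {u : Finset ℕ}
    (hu : u ⊆ splitParts N m) (hk : 2 * k + 1 ∈ insert (2 * m + 1) u) : k ≤ m := by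
  rcases mem_insert.1 hk with h | h
  · omega
  · have := mem_splitParts.1 (hu h)
    omega

theorem pairwise_disjoint_image_insert_splitParts (N : ℕ) :
    Pairwise (Function.onFun Disjoint
      fun m => (splitParts N m).powerset.image (insert (2 * m + 1))) := by
  refine fun m k hmk => disjoint_left.2 fun t htm htk => hmk ?_
  simp only [mem_image, mem_powerset] at htm htk
  obtain ⟨u, hu, rfl⟩ := htm
  obtain ⟨v, hv, h⟩ := htk
  exact le_antisymm
    (le_of_mem_insert_of_subset_splitParts hv (h ▸ mem_insert_self _ _))
    (le_of_mem_insert_of_subset_splitParts hu (h ▸ mem_insert_self _ _))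

theorem sum_oddBelowEvenSets_pow_sum {R : Type*} [CommSemiring R] (x : R) (N : ℕ) :
    ∑ t ∈ oddBelowEvenSets N, x ^ ∑ i ∈ t, i =
      ∑ m ∈ range N, x ^ (2 * m + 1) * splitProd x N m := by
  rw [oddBelowEvenSets_eq_biUnion,
    sum_biUnion ((pairwise_disjoint_image_insert_splitParts N).set_pairwise _)]
  exact sum_congr rfl fun m _ =>
    sum_image_insert_powerset_pow_sum x (two_mul_add_one_notMem_splitParts N m)

section Telescoping

theorem splitParts_erase_succ {N m : ℕ} :
    (splitParts N (m + 1)).erase (2 * m + 1) = (splitParts N m).erase (2 * m + 2) := by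
  ext i
  simp only [mem_erase, mem_splitParts]
  omega

variable {R : Type*} [CommRing R]

theorem one_sub_mul_pow_mul_splitProd (x : R) {N m : ℕ} (hm : m < N) :
    (1 - x) * (x ^ (2 * m + 1) * splitProd x N m) =
      x * ((1 + x ^ (2 * m)) * splitProd x N m) -
        x * ((1 + x ^ (2 * (m + 1))) * splitProd x N (m + 1)) := by
  have hm₀ : 2 * m + 2 ∈ splitParts N m := mem_splitParts.2 (by omega)
  have hm₁ : 2 * m + 1 ∈ splitParts N (m + 1) := mem_splitParts.2 (by omega)
  rw [splitProd, splitProd, ← mul_prod_erase _ _ hm₀, ← mul_prod_erase _ _ hm₁,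
    splitParts_erase_succ]
  ring

theorem one_sub_mul_sum_pow_mul_splitProd (x : R) (N : ℕ) :
    (1 - x) * ∑ m ∈ range N, x ^ (2 * m + 1) * splitProd x N m =
      x * (2 * splitProd x N 0 - (1 + x ^ (2 * N)) * splitProd x N N) := by
  rw [mul_sum, sum_congr rfl fun m hm => one_sub_mul_pow_mul_splitProd x (mem_range.1 hm),
    sum_range_sub' fun m => x * ((1 + x ^ (2 * m)) * splitProd x N m)]
  ring

end Telescoping

section Coefficients

variable (R : Type*) [CommSemiring R] {n N : ℕ}

theorem pedOd_eq_coeff (hn : n ≤ 2 * N) :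
    (pedOd n : R) = (∑ m ∈ range N, X ^ (2 * m + 1) * splitProd X N m : R[X]).coeff n := by
  rw [← sum_oddBelowEvenSets_pow_sum]
  exact card_nodup_partition_eq_coeff R hn (Q := fun s =>
    (∀ a ∈ s, ∀ b ∈ s, Odd a → Even b → a < b) ∧ ∃ a ∈ s, Odd a) fun _ => mem_oddBelowEvenSets

theorem deven_eq_coeff (hn : n ≤ 2 * N) :
    (Deven n : R) = (splitProd X N 0 : R[X]).coeff n := by
  rw [splitProd, ← sum_powerset_pow_sum]
  exact card_nodup_partition_eq_coeff R hn (Q := fun s => ∀ a ∈ s, Even a)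
    fun _ => mem_powerset.trans subset_splitParts_zero

theorem dodd_eq_coeff (hn : n ≤ 2 * N) :
    (Dodd n : R) = (splitProd X N N : R[X]).coeff n := by
  rw [splitProd, ← sum_powerset_pow_sum]
  exact card_nodup_partition_eq_coeff R hn (Q := fun s => ∀ a ∈ s, Odd a)
    fun _ => mem_powerset.trans subset_splitParts_self

end Coefficients

theorem pedOd_diff (n : ℕ) (hn : 1 ≤ n) :
    (pedOd n : ℤ) - (pedOd (n - 1) : ℤ)
      = 2 * (Deven (n - 1) : ℤ) - (Dodd (n - 1) : ℤ) := by
  obtain ⟨k, rfl⟩ := Nat.exists_eq_add_of_le' hn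
  rw [Nat.add_sub_cancel, pedOd_eq_coeff ℤ (N := k + 1) (by omega),
    pedOd_eq_coeff ℤ (N := k + 1) (by omega), deven_eq_coeff ℤ (N := k + 1) (by omega),
    dodd_eq_coeff ℤ (N := k + 1) (by omega)]
  set P : ℤ[X] := ∑ m ∈ range (k + 1), X ^ (2 * m + 1) * splitProd X (k + 1) m
  set E : ℤ[X] := splitProd X (k + 1) 0
  set O : ℤ[X] := splitProd X (k + 1) (k + 1)
  have hX : (X ^ (2 * (k + 1)) * O).coeff k = 0 := by
    rw [coeff_X_pow_mul', if_neg (by omega)]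
  calc P.coeff (k + 1) - P.coeff k = ((1 - X) * P).coeff (k + 1) := by
        rw [sub_mul, one_mul, coeff_sub, coeff_X_mul]
    _ = (X * (2 * E - (1 + X ^ (2 * (k + 1))) * O)).coeff (k + 1) := by
        rw [one_sub_mul_sum_pow_mul_splitProd]
    _ = 2 * E.coeff k - O.coeff k := by
        rw [coeff_X_mul, coeff_sub, coeff_ofNat_mul, add_mul, one_mul, coeff_add, hX, add_zero]
end

section
/- For every integer n ≥ 1, p^{ed}_{od}(n) - p^{ed}_{od}(n-1) ≡ D_o(n-1) (mod 2). -/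
/-!
Encode sets of distinct parts from `{1, …, N}` by generating polynomials: `G N` for the sets of odd
parts and `F N` for the sets counted by `pedOd`. Let `a` exceed all parts already present. If `a`
is even, adjoining it destroys the first property and does not affect the second. If `a` is odd,
adjoining it does not affect the first property and yields the second exactly when all previous
parts are odd. Hence
`G (2k+3) = (1 + X^(2k+3)) G (2k+1)` and
`F (2k+3) = (1 + X^(2k+2)) F (2k+1) + X^(2k+3) G (2k+1)`,
and these recursions preserve the congruence `(1 + X) F ≡ X G` modulo `2`, whose coefficients
at `X^n` give the result.
-/

section DistinctGenPoly

open Finset Polynomial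

open Classical in
/-- The generating polynomial `∑ X ^ (∑ T)` of the subsets `T` of `s` satisfying `P`. A partition
into distinct parts is encoded by its set of parts, so the coefficient of `X ^ n` counts the
partitions of `n` into distinct parts from `s` whose set of parts satisfies `P`. -/
noncomputable def distinctGenPoly (R : Type*) [Semiring R] (s : Finset ℕ) (P : Finset ℕ → Prop) :
    R[X] :=
  ∑ T ∈ s.powerset with P T, X ^ ∑ i ∈ T, i

/-- The bijection sending a partition into distinct parts to its set of parts. Positivity of the
parts becomes `0 ∉ T`. -/
def distinctPartitionEquiv (n : ℕ) (P : Finset ℕ → Prop) :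
    {π : n.Partition // π.parts.Nodup ∧ P π.parts.toFinset} ≃
      {T : Finset ℕ // 0 ∉ T ∧ ∑ i ∈ T, i = n ∧ P T} where
  toFun π := ⟨π.1.parts.toFinset, fun h ↦ (π.1.parts_pos (Multiset.mem_toFinset.mp h)).false,
    by
      rw [← Multiset.toFinset_eq π.2.1]
      exact (sum_val _).symm.trans π.1.parts_sum,
    π.2.2⟩
  invFun T := ⟨⟨T.1.val, fun hi ↦ Nat.pos_of_ne_zero (ne_of_mem_of_not_mem hi T.2.1),
    (sum_val T.1).trans T.2.2.1⟩, T.1.nodup, by simpa using T.2.2.2⟩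
  left_inv π := Subtype.ext <| Nat.Partition.ext π.2.1.dedup
  right_inv T := Subtype.ext T.1.val_toFinset

variable {R : Type*}

section Semiring

variable [Semiring R] {s : Finset ℕ} {P Q : Finset ℕ → Prop} {a n N : ℕ}

theorem distinctGenPoly_congr (h : ∀ T ⊆ s, P T ↔ Q T) :
    distinctGenPoly R s P = distinctGenPoly R s Q := by
  classical
  rw [distinctGenPoly, distinctGenPoly, filter_congr fun T hT ↦ h T (mem_powerset.mp hT)]

theorem distinctGenPoly_eq_zero (h : ∀ T ⊆ s, ¬ P T) : distinctGenPoly R s P = 0 := by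
  classical
  rw [distinctGenPoly, filter_false_of_mem fun T hT ↦ h T (mem_powerset.mp hT), sum_empty]

theorem distinctGenPoly_empty (h : P ∅) : distinctGenPoly R ∅ P = 1 := by
  classical
  rw [distinctGenPoly, powerset_empty, filter_singleton, if_pos h, sum_singleton, sum_empty,
    pow_zero]

theorem distinctGenPoly_insert (ha : a ∉ s) :
    distinctGenPoly R (insert a s) P =
      distinctGenPoly R s P + X ^ a * distinctGenPoly R s fun T ↦ P (insert a T) := by
  simp only [distinctGenPoly, sum_filter, sum_powerset_insert ha, mul_sum]
  congr 1
  refine sum_congr rfl fun T hT ↦ ?_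
  rw [sum_insert (notMem_mono (mem_powerset.mp hT) ha), pow_add, mul_ite, mul_zero]

theorem natCast_card_distinct_partition (h : n ≤ N) :
    (Nat.card {π : n.Partition // π.parts.Nodup ∧ P π.parts.toFinset} : R) =
      (distinctGenPoly R (Icc 1 N) P).coeff n := by
  classical
  have mem_filter_powerset (T : Finset ℕ) :
      (0 ∉ T ∧ ∑ i ∈ T, i = n ∧ P T) ↔
        T ∈ {T ∈ {T ∈ (Icc 1 N).powerset | P T} | n = ∑ i ∈ T, i} := by
    simp only [mem_filter, mem_powerset]
    refine ⟨fun ⟨h0, hsum, hP⟩ ↦ ⟨⟨fun i hi ↦ mem_Icc.mpr ⟨?_, ?_⟩, hP⟩, hsum.symm⟩,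
      fun ⟨⟨hT, hP⟩, hsum⟩ ↦ ⟨fun h0 ↦ by simpa using hT h0, hsum.symm, hP⟩⟩
    · exact Nat.one_le_iff_ne_zero.mpr (ne_of_mem_of_not_mem hi h0)
    · exact (single_le_sum_of_canonicallyOrdered hi).trans (hsum.trans_le h)
  rw [Nat.card_congr ((distinctPartitionEquiv n P).trans
      (Equiv.subtypeEquivRight mem_filter_powerset)),
    Nat.card_eq_fintype_card, Fintype.card_coe, natCast_card_filter, distinctGenPoly,
    finsetSum_coeff]
  simp only [coeff_X_pow]

end Semiring

/-- The condition on the set of parts of a partition counted by `Dodd`. -/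
def AllOdd (T : Finset ℕ) : Prop := ∀ a ∈ T, Odd a

/-- The condition on the set of parts of a partition counted by `pedOd`; it includes the
requirement that an odd part occurs. -/
def OddBelowEven (T : Finset ℕ) : Prop :=
  (∀ a ∈ T, ∀ b ∈ T, Odd a → Even b → a < b) ∧ ∃ a ∈ T, Odd a

section Parity

variable [Semiring R] {T s : Finset ℕ} {a : ℕ}

theorem allOdd_insert : AllOdd (insert a T) ↔ Odd a ∧ AllOdd T :=
  forall_mem_insert ..

theorem oddBelowEven_insert_of_even (ha : Even a) (hT : ∀ b ∈ T, b < a) :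
    OddBelowEven (insert a T) ↔ OddBelowEven T := by
  grind [OddBelowEven]

theorem oddBelowEven_insert_of_odd (ha : Odd a) (hT : ∀ b ∈ T, b < a) :
    OddBelowEven (insert a T) ↔ AllOdd T := by
  constructor
  · rintro ⟨odd_lt_even, -⟩ b hb
    by_contra hb_odd
    have a_lt_b : a < b := odd_lt_even a (mem_insert_self a T) b (mem_insert_of_mem hb) ha
      (Nat.not_odd_iff_even.mp hb_odd)
    exact a_lt_b.not_gt (hT b hb)
  · intro hT_odd
    have all_odd : AllOdd (insert a T) := allOdd_insert.mpr ⟨ha, hT_odd⟩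
    exact ⟨fun _ _ b hb _ hb_even ↦ absurd hb_even (Nat.not_even_iff_odd.mpr (all_odd b hb)),
      a, mem_insert_self a T, ha⟩

theorem distinctGenPoly_allOdd_insert_of_odd (ha : Odd a) (has : a ∉ s) :
    distinctGenPoly R (insert a s) AllOdd = (1 + X ^ a) * distinctGenPoly R s AllOdd := by
  rw [distinctGenPoly_insert has, one_add_mul,
    distinctGenPoly_congr fun T _ ↦ allOdd_insert.trans (and_iff_right ha)]

theorem distinctGenPoly_allOdd_insert_of_even (ha : Even a) (has : a ∉ s) :
    distinctGenPoly R (insert a s) AllOdd = distinctGenPoly R s AllOdd := by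
  rw [distinctGenPoly_insert has, distinctGenPoly_eq_zero (P := fun T ↦ AllOdd (insert a T)),
    mul_zero, add_zero]
  exact fun T _ h ↦ Nat.not_odd_iff_even.mpr ha (allOdd_insert.mp h).1

theorem distinctGenPoly_oddBelowEven_insert_of_even (ha : Even a) (hs : ∀ b ∈ s, b < a) :
    distinctGenPoly R (insert a s) OddBelowEven =
      (1 + X ^ a) * distinctGenPoly R s OddBelowEven := by
  rw [distinctGenPoly_insert fun h ↦ (hs a h).false, one_add_mul,
    distinctGenPoly_congr fun T hT ↦ oddBelowEven_insert_of_even ha fun b hb ↦ hs b (hT hb)]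

theorem distinctGenPoly_oddBelowEven_insert_of_odd (ha : Odd a) (hs : ∀ b ∈ s, b < a) :
    distinctGenPoly R (insert a s) OddBelowEven =
      distinctGenPoly R s OddBelowEven + X ^ a * distinctGenPoly R s AllOdd := by
  rw [distinctGenPoly_insert fun h ↦ (hs a h).false,
    distinctGenPoly_congr fun T hT ↦ oddBelowEven_insert_of_odd ha fun b hb ↦ hs b (hT hb)]

end Parity

theorem natCast_pedOd [Semiring R] {n N : ℕ} (h : n ≤ N) :
    (pedOd n : R) = (distinctGenPoly R (Icc 1 N) OddBelowEven).coeff n := by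
  simp only [← natCast_card_distinct_partition h, pedOd, OddBelowEven, Multiset.mem_toFinset]

theorem natCast_Dodd [Semiring R] {n N : ℕ} (h : n ≤ N) :
    (Dodd n : R) = (distinctGenPoly R (Icc 1 N) AllOdd).coeff n := by
  simp only [← natCast_card_distinct_partition h, Dodd, AllOdd, Multiset.mem_toFinset]

theorem one_add_X_mul_distinctGenPoly_oddBelowEven [CommRing R] [CharP R 2] (k : ℕ) :
    (1 + X) * distinctGenPoly R (Icc 1 (2 * k + 1)) OddBelowEven =
      X * distinctGenPoly R (Icc 1 (2 * k + 1)) AllOdd := by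
  induction k with
  | zero =>
    have empty_oddBelowEven : distinctGenPoly R ∅ OddBelowEven = 0 :=
      distinctGenPoly_eq_zero fun T hT h ↦ by simp [subset_empty.mp hT, OddBelowEven] at h
    have empty_allOdd : distinctGenPoly R ∅ AllOdd = 1 :=
      distinctGenPoly_empty <| by simp [AllOdd]
    rw [mul_zero, zero_add, Icc_self, ← insert_empty_eq,
      distinctGenPoly_oddBelowEven_insert_of_odd odd_one (by simp),
      distinctGenPoly_allOdd_insert_of_odd odd_one (notMem_empty 1),
      empty_oddBelowEven, empty_allOdd]
    ring
  | succ k ih =>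
    have Icc_eq : Icc 1 (2 * (k + 1) + 1) =
        insert (2 * k + 3) (insert (2 * k + 2) (Icc 1 (2 * k + 1))) := by
      ext i
      grind
    have even_part : Even (2 * k + 2) := by grind
    have odd_part : Odd (2 * k + 3) := by grind
    rw [Icc_eq, distinctGenPoly_oddBelowEven_insert_of_odd odd_part (by grind),
      distinctGenPoly_allOdd_insert_of_odd odd_part (by grind),
      distinctGenPoly_oddBelowEven_insert_of_even even_part (by grind),
      distinctGenPoly_allOdd_insert_of_even even_part (by grind)]
    have two_eq_zero : (2 : R[X]) = 0 := CharTwo.two_eq_zero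
    linear_combination (1 + X ^ (2 * k + 2)) * ih +
      X ^ (2 * k + 3) * distinctGenPoly R (Icc 1 (2 * k + 1)) AllOdd * two_eq_zero

theorem natCast_pedOd_succ_add_natCast_pedOd [CommRing R] [CharP R 2] (m : ℕ) :
    (pedOd (m + 1) : R) + pedOd m = Dodd m := by
  have coeff_eq := congrArg (coeff · (m + 1))
    (one_add_X_mul_distinctGenPoly_oddBelowEven (R := R) m)
  simp only [one_add_mul, coeff_add, coeff_X_mul] at coeff_eq
  rwa [← natCast_pedOd (by lia), ← natCast_pedOd (by lia), ← natCast_Dodd (by lia)] at coeff_eq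

end DistinctGenPoly

theorem pedOd_diff_mod_two (n : ℕ) (hn : 1 ≤ n) :
    (pedOd n : ℤ) - (pedOd (n - 1) : ℤ) ≡ (Dodd (n - 1) : ℤ) [ZMOD 2] := by
  obtain ⟨m, rfl⟩ := Nat.exists_eq_add_of_le' hn
  rw [Nat.add_sub_cancel]
  refine (ZMod.intCast_eq_intCast_iff _ _ 2).mp ?_
  push_cast
  rw [CharTwo.sub_eq_add, natCast_pedOd_succ_add_natCast_pedOd]
end
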